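/- Let θ1 ∈ C and define q(t) = 1 − ((2θ1−1) − (2θ1+1)√(1−t)) / ((2θ1−3) − (2θ1−1)√(1−t)) · √(1−t) for t ∈ (0,1) where the denominator does not vanish. Then q satisfies the Painlevé VI equation q'' = (1/2)(1/q + 1/(q−1) + 1/(q−t))(q')² − (1/t + 1/(t−1) + 1/(q−t))q' + q(q−1)(q−t)/(2t²(t−1)²) · ((θ∞−1)² − θ0² t/q² + θ1²(t−1)/(q−1)² + (1−θt²)t(t−1)/(q−t)²) with parameters (θ0, θ1, θt, θ∞) = (1, θ1, 0, θ1). -/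

import Mathlib

open Real

/-!
Put `s = √(1 - t)`, so that `s' = -1 / (2 s)`, and write `D = (2θ₁ - 3) - (2θ₁ - 1) s`. Then `q` is a
rational function of `s`, and so are `q'` and `q''`. The three quantities in the denominators of
Painlevé VI factor completely:
`q = (s - 1) ((2θ₁ + 1) s - (2θ₁ - 3)) / D`,
`q - 1 = -((2θ₁ - 1) - (2θ₁ + 1) s) s / D`,
`q - t = -(2θ₁ - 1) s (1 - s)² / D`.
The assumptions that these do not vanish make every factor nonzero, and the equation becomes a
polynomial identity in `s` and `θ₁`.
-/

lemma hasDerivAt_sqrt_one_sub {u : ℝ} (hu : u < 1) :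
    HasDerivAt (fun t : ℝ => (Real.sqrt (1 - t) : ℂ)) (-1 / (2 * (Real.sqrt (1 - u) : ℂ))) u := by
  have h := ((hasDerivAt_id u).const_sub 1).sqrt (sub_pos.2 hu).ne'
  simpa using h.ofReal_comp

/-- The numerator of `dq/ds` as a polynomial in `s = √(1 - t)`; the denominator is `D ^ 2`. -/
def derivNum (θ s : ℂ) : ℂ :=
  (-2 * (2 * θ - 1) + 2 * (2 * θ + 1) * s) * ((2 * θ - 3) - (2 * θ - 1) * s)
    + ((2 * θ - 3) - 2 * (2 * θ - 1) * s + (2 * θ + 1) * s ^ 2) * (2 * θ - 1)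

lemma hasDerivAt_q (θ : ℂ) {u : ℝ} (hu : u < 1)
    (hD : (2 * θ - 3) - (2 * θ - 1) * (Real.sqrt (1 - u) : ℂ) ≠ 0) :
    HasDerivAt (fun t : ℝ => 1 -
        ((2 * θ - 1) - (2 * θ + 1) * (Real.sqrt (1 - t) : ℂ)) /
          ((2 * θ - 3) - (2 * θ - 1) * (Real.sqrt (1 - t) : ℂ)) * (Real.sqrt (1 - t) : ℂ))
      (-derivNum θ (Real.sqrt (1 - u)) / (2 * (Real.sqrt (1 - u) : ℂ) *
        ((2 * θ - 3) - (2 * θ - 1) * (Real.sqrt (1 - u) : ℂ)) ^ 2)) u := by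
  have hs := hasDerivAt_sqrt_one_sub hu
  have hs0 : (Real.sqrt (1 - u) : ℂ) ≠ 0 :=
    Complex.ofReal_ne_zero.2 (Real.sqrt_pos.2 (sub_pos.2 hu)).ne'
  have h := ((((hs.const_mul (2 * θ + 1)).const_sub (2 * θ - 1)).fun_div
    ((hs.const_mul (2 * θ - 1)).const_sub (2 * θ - 3)) hD).fun_mul hs).const_sub 1
  refine h.congr_deriv ?_
  unfold derivNum
  generalize (Real.sqrt (1 - u) : ℂ) = s at *
  field_simp
  ring

/-- The derivative of the formula in `hasDerivAt_q`, hence a formula for `q''`. -/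
lemma hasDerivAt_deriv_q (θ : ℂ) {u : ℝ} (hu : u < 1)
    (hD : (2 * θ - 3) - (2 * θ - 1) * (Real.sqrt (1 - u) : ℂ) ≠ 0) :
    HasDerivAt (fun t : ℝ => -derivNum θ (Real.sqrt (1 - t)) / (2 * (Real.sqrt (1 - t) : ℂ) *
        ((2 * θ - 3) - (2 * θ - 1) * (Real.sqrt (1 - t) : ℂ)) ^ 2))
      ((2 * (2 * θ + 1) * ((2 * θ - 3) - (2 * θ - 1) * (Real.sqrt (1 - u) : ℂ)) ^ 2
          * (Real.sqrt (1 - u) : ℂ)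
        + 2 * derivNum θ (Real.sqrt (1 - u)) * (2 * θ - 1) * (Real.sqrt (1 - u) : ℂ)
        - derivNum θ (Real.sqrt (1 - u)) *
          ((2 * θ - 3) - (2 * θ - 1) * (Real.sqrt (1 - u) : ℂ)))
        / (4 * (Real.sqrt (1 - u) : ℂ) ^ 3 *
          ((2 * θ - 3) - (2 * θ - 1) * (Real.sqrt (1 - u) : ℂ)) ^ 3)) u := by
  have hs := hasDerivAt_sqrt_one_sub hu
  have hs0 : (Real.sqrt (1 - u) : ℂ) ≠ 0 :=
    Complex.ofReal_ne_zero.2 (Real.sqrt_pos.2 (sub_pos.2 hu)).ne'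
  have hden := (hs.const_mul (2 * θ - 1)).const_sub (2 * θ - 3)
  have hnum := (((hs.const_mul (2 * (2 * θ + 1))).const_add (-2 * (2 * θ - 1))).fun_mul hden).fun_add
    ((((hs.const_mul (2 * (2 * θ - 1))).const_sub (2 * θ - 3)).fun_add
      ((hs.fun_pow 2).const_mul (2 * θ + 1))).mul_const (2 * θ - 1))
  have h := hnum.fun_neg.fun_div ((hs.const_mul 2).fun_mul (hden.fun_pow 2))
    (mul_ne_zero (mul_ne_zero two_ne_zero hs0) (pow_ne_zero 2 hD))
  refine h.congr_deriv ?_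
  unfold derivNum
  generalize (Real.sqrt (1 - u) : ℂ) = s at *
  generalize hDd : (2 * θ - 3) - (2 * θ - 1) * s = D at *
  clear h hnum hden hs
  push_cast
  simp only [pow_one]
  field_simp
  rw [← hDd]
  ring

/-- The algebraic function `q(t) = 1 − [(2θ1−1)−(2θ1+1)√(1−t)]/[(2θ1−3)−(2θ1−1)√(1−t)] · √(1−t)`
solves Painlevé VI with parameters (θ0, θ1, θt, θ∞) = (1, θ1, 0, θ1). -/
theorem algebraic_PVI_solution (θ1 : ℂ) :
    ∀ q : ℝ → ℂ,
      (q = fun t : ℝ => 1 -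
        ((2 * θ1 - 1) - (2 * θ1 + 1) * (Real.sqrt (1 - t) : ℂ)) /
          ((2 * θ1 - 3) - (2 * θ1 - 1) * (Real.sqrt (1 - t) : ℂ)) * (Real.sqrt (1 - t) : ℂ)) →
      ∀ t ∈ Set.Ioo (0 : ℝ) 1,
        (2 * θ1 - 3) - (2 * θ1 - 1) * (Real.sqrt (1 - t) : ℂ) ≠ 0 →
        q t ≠ 0 → q t ≠ 1 → q t ≠ (t : ℂ) →
        deriv (deriv q) t =
          (1 / 2) * (1 / q t + 1 / (q t - 1) + 1 / (q t - (t : ℂ))) * (deriv q t) ^ 2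
          - (1 / (t : ℂ) + 1 / ((t : ℂ) - 1) + 1 / (q t - (t : ℂ))) * deriv q t
          + q t * (q t - 1) * (q t - (t : ℂ)) / (2 * (t : ℂ) ^ 2 * ((t : ℂ) - 1) ^ 2) *
            ((θ1 - 1) ^ 2 - (1 : ℂ) ^ 2 * (t : ℂ) / (q t) ^ 2
              + θ1 ^ 2 * ((t : ℂ) - 1) / (q t - 1) ^ 2
              + (1 - (0 : ℂ) ^ 2) * (t : ℂ) * ((t : ℂ) - 1) / (q t - (t : ℂ)) ^ 2) := by
  intro q hq t ht hD h0 h1 h2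
  have hev : deriv q =ᶠ[nhds t] fun t : ℝ => -derivNum θ1 (Real.sqrt (1 - t)) /
      (2 * (Real.sqrt (1 - t) : ℂ) *
        ((2 * θ1 - 3) - (2 * θ1 - 1) * (Real.sqrt (1 - t) : ℂ)) ^ 2) := by
    have hcont : Continuous fun t : ℝ =>
        (2 * θ1 - 3) - (2 * θ1 - 1) * (Real.sqrt (1 - t) : ℂ) := by fun_prop
    filter_upwards [Iio_mem_nhds ht.2, hcont.continuousAt.eventually_ne hD] with u hu hDu
    rw [hq]
    exact (hasDerivAt_q θ1 hu hDu).deriv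
  rw [hev.deriv_eq, hev.eq_of_nhds, (hasDerivAt_deriv_q θ1 ht.2 hD).deriv]
  have hs0 : (Real.sqrt (1 - t) : ℂ) ≠ 0 :=
    Complex.ofReal_ne_zero.2 (Real.sqrt_pos.2 (sub_pos.2 ht.2)).ne'
  have hts : (t : ℂ) = (1 - (Real.sqrt (1 - t) : ℂ)) * (1 + (Real.sqrt (1 - t) : ℂ)) := by
    have h : t = (1 - Real.sqrt (1 - t)) * (1 + Real.sqrt (1 - t)) := by
      nlinarith [Real.sq_sqrt (sub_pos.2 ht.2).le]
    exact_mod_cast h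
  have ht0 : (t : ℂ) ≠ 0 := Complex.ofReal_ne_zero.2 ht.1.ne'
  have hqt := congrFun hq t
  generalize q t = Q at *
  generalize (Real.sqrt (1 - t) : ℂ) = s at *
  generalize (t : ℂ) = T at *
  clear hev hq ht
  subst hts
  obtain ⟨hm, hp⟩ := mul_ne_zero_iff.1 ht0
  generalize hDd : (2 * θ1 - 3) - (2 * θ1 - 1) * s = D at *
  have e0 : Q = (s - 1) * ((2 * θ1 + 1) * s - (2 * θ1 - 3)) / D := by
    rw [hqt]; field_simp; rw [← hDd]; ring
  have e1 : Q - 1 = -((2 * θ1 - 1) - (2 * θ1 + 1) * s) * s / D := by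
    rw [hqt]; ring
  have e2 : Q - (1 - s) * (1 + s) = -(2 * θ1 - 1) * s * (1 - s) ^ 2 / D := by
    rw [e0]; field_simp; rw [← hDd]; ring
  have e3 : (1 - s) * (1 + s) - 1 = -s ^ 2 := by ring
  have f0 : (2 * θ1 + 1) * s - (2 * θ1 - 3) ≠ 0 := by
    rintro h; apply h0; rw [e0, h]; simp
  have f1 : (2 * θ1 - 1) - (2 * θ1 + 1) * s ≠ 0 := by
    rintro h; apply h1; rw [← sub_eq_zero, e1, h]; simp
  have f2 : 2 * θ1 - 1 ≠ 0 := by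
    rintro h; apply h2; rw [← sub_eq_zero, e2, h]; simp
  have hm' : s - 1 ≠ 0 := by
    rintro h; apply hm; linear_combination -h
  rw [e1, e2, e3, e0]
  clear e0 e1 e2 e3 h0 h1 h2 hqt ht0
  unfold derivNum
  rw [hDd]
  -- The factors get names so that clearing denominators does not expand them.
  generalize hL : (2 * θ1 + 1) * s - (2 * θ1 - 3) = L at *
  generalize hM : (2 * θ1 - 1) - (2 * θ1 + 1) * s = M at *
  generalize hd : 2 * θ1 - 1 = d at *
  generalize hz : s - 1 = z at *
  generalize hw : 1 + s = w at *
  have hmz : 1 - s = -z := by rw [← hz]; ring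
  rw [hmz]
  clear hm hmz
  field_simp
  subst hz hw hL hM hDd hd
  ring
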